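/- Let X ⊆ P² be a k-configuration of type (1,2,…,s) with s ≥ 2, and suppose the number r of lines in P² containing exactly s points of X satisfies 1 ≤ r < s. Then for every integer m ≥ s + 1, ΔH_{mX}(m·s − 1) = r. -/

import Mathlib

/-- The projective plane over a field `K`, as the projectivization of `K³`. -/
abbrev P2 (K : Type) [Field K] := Projectivization K (Fin 3 → K)

/-- A line in `P2 K`: a 2-dimensional linear subspace of `K³`. -/
structure ProjLine (K : Type) [Field K] where
  toSubmodule : Submodule K (Fin 3 → K)
  finrank_eq_two : Module.finrank K toSubmodule = 2

/-- The set of points of `P2 K` lying on a line. -/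
def ProjLine.points {K : Type} [Field K] (L : ProjLine K) : Set (P2 K) :=
  {p | p.submodule ≤ L.toSubmodule}

/-- The homogeneous prime ideal of a point of `P2 K`: the ideal generated by
the linear forms vanishing at the point. -/
noncomputable def pointIdeal {K : Type} [Field K] (p : P2 K) :
    Ideal (MvPolynomial (Fin 3) K) :=
  Ideal.span {f | f.IsHomogeneous 1 ∧ MvPolynomial.eval p.rep f = 0}

/-- The defining ideal `I_{mX} = ⋂_{P ∈ X} I_P^m` of the fat point scheme `mX`. -/
noncomputable def fatIdeal {K : Type} [Field K] (X : Set (P2 K)) (m : ℕ) :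
    Ideal (MvPolynomial (Fin 3) K) :=
  ⨅ p ∈ X, (pointIdeal p) ^ m

/-- The Hilbert function of `R/I`: `H(t) = dim_K R_t - dim_K I_t`. -/
noncomputable def hilb {K : Type} [Field K] (I : Ideal (MvPolynomial (Fin 3) K)) (t : ℕ) : ℕ :=
  Module.finrank K ↥(MvPolynomial.homogeneousSubmodule (Fin 3) K t) -
    Module.finrank K ↥(Submodule.restrictScalars K (I : Submodule (MvPolynomial (Fin 3) K) (MvPolynomial (Fin 3) K)) ⊓ MvPolynomial.homogeneousSubmodule (Fin 3) K t)

/-- The Hilbert function extended to `ℤ`, with `H(t) = 0` for `t < 0`. -/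
noncomputable def hilbZ {K : Type} [Field K] (I : Ideal (MvPolynomial (Fin 3) K)) (t : ℤ) : ℤ :=
  if t < 0 then 0 else hilb I t.toNat

/-- The first difference `ΔH(t) = H(t) - H(t-1)` of the Hilbert function. -/
noncomputable def deltaHilb {K : Type} [Field K] (I : Ideal (MvPolynomial (Fin 3) K)) (t : ℤ) : ℤ :=
  hilbZ I t - hilbZ I (t - 1)

/-- `X` is a k-configuration of type `(d 0, …, d (s-1))` defined using the subsets
`Xs 0, …, Xs (s-1)` and the (distinct) lines `Ls 0, …, Ls (s-1)`. -/
structure IsKConfig {K : Type} [Field K] {s : ℕ} (X : Set (P2 K)) (d : Fin s → ℕ)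
    (Xs : Fin s → Set (P2 K)) (Ls : Fin s → ProjLine K) : Prop where
  one_le : ∀ i, 1 ≤ d i
  strictMono : StrictMono d
  lines_distinct : Function.Injective Ls
  union_eq : X = ⋃ i, Xs i
  card_eq : ∀ i, (Xs i).ncard = d i
  subset_line : ∀ i, Xs i ⊆ (Ls i).points
  not_mem : ∀ i j : Fin s, j < i → ∀ p ∈ Xs j, p ∉ (Ls i).points



section Comb

open Classical in
/-- Remove one from the multiplicities along a line. -/
noncomputable def stripF {α β : Type} (on : α → β → Prop) (l : β) (f : α → ℕ) : α → ℕ :=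
  fun p => if on p l then f p - 1 else f p

open Classical in
/-- The sum of the multiplicities along a line. -/
noncomputable def lineSum {α β : Type} (on : α → β → Prop) (X : Finset α) (l : β) (f : α → ℕ) : ℕ :=
  ∑ p ∈ X.filter (fun p => on p l), f p

inductive Good {α β : Type} (on : α → β → Prop) (X : Finset α) : (α → ℕ) → ℕ → Prop
  | zero (f : α → ℕ) (n : ℕ) (h : ∀ p ∈ X, f p = 0) : Good on X f n
  | strip (f : α → ℕ) (n : ℕ) (l : β) (h : lineSum on X l f ≤ n + 1)
      (hg : Good on X (stripF on l f) n) : Good on X f (n + 1)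

theorem lineSum_mono {α β : Type} (on : α → β → Prop) (X : Finset α) (l : β) {f g : α → ℕ}
    (h : ∀ p ∈ X, f p ≤ g p) : lineSum on X l f ≤ lineSum on X l g := by
  classical
  unfold lineSum
  exact Finset.sum_le_sum fun p hp => h p (Finset.mem_filter.1 hp).1

theorem Good.mono {α β : Type} {on : α → β → Prop} {X : Finset α} {g : α → ℕ} {n : ℕ}
    (h : Good on X g n) : ∀ {f : α → ℕ}, (∀ p ∈ X, f p ≤ g p) → Good on X f n := by
  induction h with
  | zero g n h =>
    intro f hf
    exact Good.zero _ _ fun p hp => by have := hf p hp; have := h p hp; omega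
  | strip g n l h hg ih =>
    intro f hf
    refine Good.strip _ _ l ((lineSum_mono on X l hf).trans h) (ih ?_)
    intro p hp
    have := hf p hp
    unfold stripF
    split_ifs <;> omega

theorem Good.succ {α β : Type} {on : α → β → Prop} {X : Finset α} {g : α → ℕ} {n : ℕ}
    (h : Good on X g n) : Good on X g (n + 1) := by
  induction h with
  | zero g n h => exact Good.zero _ _ h
  | strip g n l h hg ih => exact Good.strip _ _ l (by omega) ih

open Classical in
noncomputable def cnt {α β : Type} (on : α → β → Prop) (T : Finset β) (p : α) : ℕ :=
  (T.filter (fun l => on p l)).card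

theorem Good.strips {α β : Type} {on : α → β → Prop} {X : Finset α} {n : ℕ} (T : Finset β) :
    ∀ {g : α → ℕ}, (∀ l ∈ T, lineSum on X l g ≤ n + 1) →
      Good on X (fun p => g p - cnt on T p) n → Good on X g (n + T.card) := by
  classical
  induction T using Finset.induction_on with
  | empty => intro g _ h; simpa [cnt] using h
  | insert a T ha ih =>
    intro g hs h
    rw [Finset.card_insert_of_notMem ha, ← add_assoc]
    refine Good.strip _ _ a ((hs a (by simp)).trans (by omega)) (ih ?_ ?_)
    · intro l hl
      refine le_trans (lineSum_mono on X l ?_) (hs l (by simp [hl]))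
      intro p _
      unfold stripF
      split_ifs <;> omega
    · refine h.mono ?_
      intro p _
      unfold stripF cnt
      rw [Finset.filter_insert]
      split_ifs with h1
      · rw [Finset.card_insert_of_notMem (by simp [ha])]
        omega
      · exact le_rfl

open Classical in
inductive KC {α β : Type} (on : α → β → Prop) : ℕ → Finset α → Prop
  | zero : KC on 0 ∅
  | succ (n : ℕ) (X : Finset α) (l : β) (h : (X.filter (fun p => on p l)).card = n + 1)
      (hk : KC on n (X.filter (fun p => ¬ on p l))) : KC on (n + 1) X

open Classical in
theorem inter_le_one {α β : Type} {on : α → β → Prop}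
    (uniq : ∀ l l' : β, l ≠ l' → ∀ p q : α, on p l → on p l' → on q l → on q l' → p = q)
    (X : Finset α) {l m : β} (h : l ≠ m) :
    ((X.filter (fun p => on p l)).filter (fun p => on p m)).card ≤ 1 := by
  rw [Finset.card_le_one]
  intro a ha b hb
  simp only [Finset.mem_filter] at ha hb
  exact uniq l m h a b ha.1.2 ha.2 hb.1.2 hb.2

open Classical in
theorem split_card {α β : Type} (on : α → β → Prop) (X : Finset α) (l m : β) :
    (X.filter (fun p => on p m)).card = ((X.filter (fun p => on p l)).filter (fun p => on p m)).card
      + ((X.filter (fun p => ¬ on p l)).filter (fun p => on p m)).card := by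
  rw [Finset.filter_filter, Finset.filter_filter,
    ← Finset.card_filter_add_card_filter_not (s := X.filter (fun p => on p m)) (fun p => on p l),
    Finset.filter_filter, Finset.filter_filter]
  congr 2 <;> (ext p; simp; tauto)

open Classical in
theorem KC.max {α β : Type} {on : α → β → Prop}
    (uniq : ∀ l l' : β, l ≠ l' → ∀ p q : α, on p l → on p l' → on q l → on q l' → p = q)
    {n : ℕ} {X : Finset α} (h : KC on n X) (m : β) : (X.filter (fun p => on p m)).card ≤ n := by
  induction h with
  | zero => simp
  | succ n X l h hk ih =>
    by_cases hlm : l = m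
    · subst hlm; omega
    · have := inter_le_one uniq X hlm
      have := split_card on X l m
      omega

open Classical in
theorem KC.peel {α β : Type} {on : α → β → Prop}
    (uniq : ∀ l l' : β, l ≠ l' → ∀ p q : α, on p l → on p l' → on q l → on q l' → p = q)
    {n : ℕ} : ∀ {X : Finset α}, KC on (n + 1) X → ∀ m : β,
      (X.filter (fun p => on p m)).card = n + 1 → KC on n (X.filter (fun p => ¬ on p m)) := by
  induction n with
  | zero =>
    intro X h m hm
    cases h with
    | succ _ _ l h hk =>
      generalize hY : X.filter (fun p => ¬ on p l) = Y at hk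
      cases hk with
      | zero =>
        have h1 := Finset.card_filter_add_card_filter_not (s := X) (fun p => on p l)
        have h2 := Finset.card_filter_add_card_filter_not (s := X) (fun p => on p m)
        have : X.filter (fun p => ¬ on p m) = ∅ := by
          rw [← Finset.card_eq_zero]
          rw [hY] at h1
          simp only [Finset.card_empty] at h1
          omega
        rw [this]; exact KC.zero
  | succ n ih =>
    intro X h m hm
    cases h with
    | succ _ _ l h hk =>
      by_cases hlm : l = m
      · subst hlm; exact hk
      · have h1 := inter_le_one uniq X hlm
        have h2 := split_card on X l m
        have h3 := hk.max uniq m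
        have h4 := ih hk m (by omega)
        refine KC.succ n _ l ?_ ?_
        · have h5 := split_card on X m l
          have : ((X.filter (fun p => on p l)).filter (fun p => on p m)) =
             ((X.filter (fun p => on p m)).filter (fun p => on p l)) := Finset.filter_comm ..
          rw [this] at h1 h2
          omega
        · rw [Finset.filter_comm]
          exact h4

open Classical in
theorem KC.peels {α β : Type} {on : α → β → Prop}
    (uniq : ∀ l l' : β, l ≠ l' → ∀ p q : α, on p l → on p l' → on q l → on q l' → p = q)
    {s : ℕ} {X : Finset α} (h : KC on s X) (T : Finset β) : T.card ≤ s → 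
    (∀ l ∈ T, (X.filter (fun p => on p l)).card = s) →
    KC on (s - T.card) (X.filter (fun p => cnt on T p = 0)) ∧ 
    (T.card < s → ∀ m ∉ T, (X.filter (fun p => on p m)).card = s → 
      ((X.filter (fun p => cnt on T p = 0)).filter (fun p => on p m)).card = s - T.card) := by
  induction T using Finset.induction_on with
  | empty => intro _ _; simp [cnt]; exact h
  | insert a T ha ih =>
    intro hT hl
    rw [Finset.card_insert_of_notMem ha] at *
    obtain ⟨h1, h2⟩ := ih (by omega) (fun l hl' => hl l (by simp [hl']))
    have e : X.filter (fun p => cnt on (insert a T) p = 0) =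
      (X.filter (fun p => cnt on T p = 0)).filter (fun p => ¬ on p a) := by
      ext p
      simp [cnt, Finset.filter_eq_empty_iff]
      tauto
    rw [e]
    have h3 := h2 (by omega) a ha (hl a (by simp))
    have h4 : KC on (s - (T.card + 1)) ((X.filter (fun p => cnt on T p = 0)).filter (fun p => ¬ on p a)) := by
      obtain ⟨k, hk⟩ : ∃ k, s - T.card = k + 1 := ⟨s - T.card - 1, by omega⟩
      rw [hk] at h1 h3
      have := h1.peel uniq a h3
      rwa [show s - (T.card + 1) = k by omega]
    refine ⟨h4, ?_⟩
    intro hlt m hm hms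
    simp only [Finset.mem_insert, not_or] at hm
    have h5 := h2 (by omega) m hm.2 hms
    have h6 := inter_le_one uniq (X.filter (fun p => cnt on T p = 0)) (Ne.symm hm.1)
    have h7 := split_card on (X.filter (fun p => cnt on T p = 0)) a m
    have h8 := h4.max uniq m
    omega

open Classical in
/-- final phase -/
theorem KC.final {α β : Type} {on : α → β → Prop} {X : Finset α}
    {n : ℕ} {Z : Finset α} (h : KC on n Z) : Z ⊆ X → ∀ g : α → ℕ, (∀ p ∈ Z, g p ≤ 1) →
    (∀ p ∈ X, p ∉ Z → g p = 0) → Good on X g n := by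
  induction h with
  | zero => intro _ g _ h; exact Good.zero _ _ fun p hp => h p hp (by simp)
  | succ n Z l h hk ih =>
    intro hZ g h1 h2
    refine Good.strip _ _ l ?_ (ih ((Finset.filter_subset _ _).trans hZ) _ ?_ ?_)
    · rw [← h, Finset.card_eq_sum_ones]
      unfold lineSum
      calc _ ≤ ∑ p ∈ X.filter (fun p => on p l), (if p ∈ Z then 1 else 0) := by
              refine Finset.sum_le_sum fun p hp => ?_
              split_ifs with hz
              · exact h1 p hz
              · exact (h2 p (Finset.mem_filter.1 hp).1 hz).le
        _ = _ := by
              rw [← Finset.sum_filter]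
              congr 1
              ext p
              simp only [Finset.mem_filter]
              constructor
              · tauto
              · intro hp; exact ⟨⟨hZ hp.1, hp.2⟩, hp.1⟩
    · intro p hp
      have := h1 p (Finset.mem_filter.1 hp).1
      unfold stripF; split_ifs <;> omega
    · intro p hp hpz
      simp only [Finset.mem_filter, not_and, not_not] at hpz
      unfold stripF
      by_cases hz : p ∈ Z
      · have := h1 p hz
        rw [if_pos (hpz hz)]; omega
      · have := h2 p hp hz
        split_ifs <;> omega

open Classical in
/-- bound for lines not in `Λ` -/
theorem nline_bound {α β : Type} {on : α → β → Prop} {X Z : Finset α} {s n μ : ℕ} (hμ : 1 ≤ μ)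
    (l : β) (hl : (X.filter (fun p => on p l)).card + 1 ≤ s)
    (hZ : (Z.filter (fun p => on p l)).card ≤ n)
    (g : α → ℕ) (h1 : ∀ p ∈ Z, g p ≤ μ + 1) (h2 : ∀ p ∈ X, p ∉ Z → g p ≤ μ) :
    lineSum on X l g ≤ μ * s - 1 + n := by
  unfold lineSum
  have : ∑ p ∈ X.filter (fun p => on p l), g p ≤
      ∑ p ∈ X.filter (fun p => on p l), (μ + if p ∈ Z then 1 else 0) := by
    refine Finset.sum_le_sum fun p hp => ?_
    split_ifs with hz
    · exact h1 p hz
    · exact h2 p (Finset.mem_filter.1 hp).1 hz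
  refine this.trans ?_
  rw [Finset.sum_add_distrib, Finset.sum_const, ← Finset.sum_filter, ← Finset.card_eq_sum_ones, smul_eq_mul]
  have h3 : ((X.filter (fun p => on p l)).filter (fun p => p ∈ Z)).card ≤ n := by
    refine (Finset.card_le_card ?_).trans hZ
    intro p hp
    simp only [Finset.mem_filter] at hp ⊢
    tauto
  have h4 : ((X.filter (fun p => on p l)).card + 1) * μ ≤ s * μ := Nat.mul_le_mul_right _ hl
  rw [add_mul, one_mul, mul_comm s] at h4
  omega

open Classical in
/-- N phase; here `μ + 1` is the current multiplicity -/
theorem KC.nphase {α β : Type} {on : α → β → Prop} {X : Finset α}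
    (join : ∀ p q : α, ∃ l : β, on p l ∧ on q l) {s μ : ℕ} (hμ : 1 ≤ μ)
    {Q : α} {n : ℕ} {Z : Finset α} (h : KC on n Z) : 1 ≤ n → 
    Z ⊆ X → (∀ l, ∀ p ∈ Z, on p l → (X.filter (fun p => on p l)).card + 1 ≤ s) → 
    ∀ g : α → ℕ, (∀ p ∈ Z, g p ≤ μ + 1) → (∀ p ∈ X, p ∉ Z → g p ≤ μ) → 
    (∀ g' : α → ℕ, (∀ p, g' p ≤ g p) → (∀ p ∈ X, g' p ≤ μ) → g' Q ≤ g Q - 1 → 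
      Good on X g' (μ * s - 1)) → Good on X g (μ * s - 1 + n) := by
  induction h with
  | zero => intro h; omega
  | succ n Z l h hk ih =>
    intro _ hZX hl g h1 h2 hg
    have hle : ∀ l p, stripF on l g p ≤ g p := by
      intro l p; unfold stripF; split_ifs <;> omega
    by_cases hn : n = 0
    · subst hn
      generalize hY : Z.filter (fun p => ¬ on p l) = Y at hk
      cases hk with
      | zero =>
        have hZ : Z.card = 1 := by
          have := Finset.card_filter_add_card_filter_not (s := Z) (fun p => on p l)
          rw [hY] at this
          simpa [h] using this.symm
        obtain ⟨P, rfl⟩ := Finset.card_eq_one.1 hZ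
        obtain ⟨l', hP, hQ⟩ := join P Q
        refine Good.strip _ _ l' ?_ (hg _ (hle _) ?_ ?_)
        · refine nline_bound hμ l' (hl l' P (by simp) hP) (n := 0 + 1) ?_ g h1 h2
          exact (Finset.card_le_card (Finset.filter_subset _ _)).trans (by simp)
        · intro p hp
          by_cases hpP : p = P
          · subst hpP
            have := h1 p (by simp)
            unfold stripF; rw [if_pos hP]; omega
          · exact (hle _ _).trans (h2 p hp (by simpa using hpP))
        · unfold stripF; rw [if_pos hQ]
    · have hne : (Z.filter (fun p => on p l)).Nonempty := by
        rw [← Finset.card_pos]; omega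
      obtain ⟨p0, hp0⟩ := hne
      rw [Finset.mem_filter] at hp0
      rw [← add_assoc]
      refine Good.strip _ _ l ?_ (ih (by omega) ((Finset.filter_subset _ _).trans hZX) ?_ _ ?_ ?_ ?_)
      · exact nline_bound hμ l (hl l p0 hp0.1 hp0.2) (n := n + 1) h.le g h1 h2
      · intro l p hp; exact hl l p (Finset.mem_filter.1 hp).1
      · intro p hp; exact (hle _ _).trans (h1 p (Finset.mem_filter.1 hp).1)
      · intro p hp hpz
        simp only [Finset.mem_filter, not_and, not_not] at hpz
        by_cases hz : p ∈ Z
        · have := h1 p hz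
          unfold stripF
          rw [if_pos (hpz hz)]; omega
        · exact (hle _ _).trans (h2 p hp hz)
      · intro g' hg' hb hQ
        refine hg g' (fun p => (hg' p).trans (hle _ _)) hb (hQ.trans ?_)
        have := hle l Q
        omega

open Classical in
theorem comb_main {α β : Type} {on : α → β → Prop}
    (uniq : ∀ l l' : β, l ≠ l' → ∀ p q : α, on p l → on p l' → on q l → on q l' → p = q)
    (join : ∀ p q : α, ∃ l : β, on p l ∧ on q l)
    {s : ℕ} {X : Finset α} (h : KC on s X) (Λ : Finset β)
    (hΛ : ∀ l, l ∈ Λ ↔ (X.filter (fun p => on p l)).card = s) (h1 : 1 ≤ Λ.card) (h2 : Λ.card < s)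
    (m : ℕ) (hm : s + 1 ≤ m) : Good on X (fun p => m - cnt on Λ p) (m * s - 1 - Λ.card) := by
  obtain ⟨M, hM⟩ : Λ.Nonempty := by rw [← Finset.card_pos]; omega
  set r := Λ.card with hr
  set T := Λ.erase M with hT
  have hTc : T.card + 1 = r := by rw [hT, Finset.card_erase_of_mem hM]; omega
  have hcT : ∀ p, cnt on Λ p = cnt on T p + if on p M then 1 else 0 := by
    intro p
    rw [← Finset.insert_erase hM, ← hT]
    unfold cnt
    rw [Finset.filter_insert]
    split_ifs
    · rw [Finset.card_insert_of_notMem (by simp [hT])]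
    · simp
  have hKC := (h.peels uniq Λ h2.le (fun l hl => (hΛ l).1 hl)).1
  set X' := X.filter (fun p => cnt on Λ p = 0) with hX'
  have hX'X : X' ⊆ X := Finset.filter_subset _ _
  have hline : ∀ l, ∀ p ∈ X', on p l → (X.filter (fun p => on p l)).card + 1 ≤ s := by
    intro l p hp hpl
    have a1 := h.max uniq l
    have a2 : (X.filter (fun p => on p l)).card ≠ s := by
      intro hc
      rw [← hΛ] at hc
      rw [hX', Finset.mem_filter] at hp
      have := hp.2
      simp only [cnt, Finset.card_eq_zero, Finset.filter_eq_empty_iff] at this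
      exact this hc hpl
    omega
  -- singles
  have hpos : ∀ l ∈ Λ, ∀ p, on p l → 1 ≤ cnt on Λ p := by
    intro l hl p hp
    unfold cnt
    exact Finset.card_pos.2 ⟨l, by simp [hl, hp]⟩
  have hsing : ∀ l ∈ Λ, (((X.filter (fun p => on p l))).filter (fun p => cnt on Λ p = 1)).card = s - r + 1 := by
    intro l hl
    have := (h.peels uniq (Λ.erase l) (by rw [Finset.card_erase_of_mem hl]; omega)
      (fun l' hl' => (hΛ l').1 (Finset.mem_of_mem_erase hl'))).2 
      (by rw [Finset.card_erase_of_mem hl]; omega) l (by simp) ((hΛ l).1 hl)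
    rw [Finset.card_erase_of_mem hl] at this
    rw [show s - r + 1 = s - (Λ.card - 1) by omega, ← this, Finset.filter_comm]
    congr 1
    ext p
    simp only [Finset.mem_filter, and_congr_left_iff, and_congr_right_iff]
    intro hp _
    have : cnt on Λ p = cnt on (Λ.erase l) p + 1 := by
      conv_lhs => rw [← Finset.insert_erase hl]
      unfold cnt
      rw [Finset.filter_insert, if_pos hp, Finset.card_insert_of_notMem (by simp)]
    omega
  -- meeting points
  have hmeet : ∀ l ∈ T, ∃ p ∈ X, on p l ∧ on p M := by
    intro l hl
    have hlΛ := Finset.mem_of_mem_erase hl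
    have := (h.peels uniq {M} (by simp; omega)
      (fun l' hl' => (hΛ l').1 (by rw [Finset.mem_singleton] at hl'; rwa [hl']))).2 
      (by simp; omega) l (by simpa using Finset.ne_of_mem_erase hl) ((hΛ l).1 hlΛ)
    rw [Finset.card_singleton] at this
    by_contra hcon
    push Not at hcon
    have e : ((X.filter (fun p => cnt on {M} p = 0)).filter (fun p => on p l)) = X.filter (fun p => on p l) := by
      ext p
      simp only [Finset.mem_filter, cnt, Finset.card_eq_zero, Finset.filter_eq_empty_iff, Finset.mem_singleton]
      constructor
      · tauto
      · intro hp
        refine ⟨⟨hp.1, ?_⟩, hp.2⟩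
        rintro _ rfl
        exact hcon p hp.1 hp.2
    rw [e, (hΛ l).1 hlΛ] at this
    omega
  -- general sum bound
  have hsum : ∀ l ∈ Λ, ∀ μ, ∀ g : α → ℕ, (∀ p ∈ X, 1 ≤ cnt on Λ p → g p ≤ μ + 1 ∧ (cnt on Λ p ≠ 1 → g p ≤ μ)) →
      lineSum on X l g ≤ (s - r + 1) * (μ + 1) + (r - 1) * μ := by
    intro l hl μ g hg
    unfold lineSum
    rw [← Finset.sum_filter_add_sum_filter_not _ (fun p => cnt on Λ p = 1)]
    have c1 := hsing l hl
    have c2 := Finset.card_filter_add_card_filter_not (s := X.filter (fun p => on p l)) (fun p => cnt on Λ p = 1)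
    rw [(hΛ l).1 hl, c1] at c2
    refine Nat.add_le_add ?_ ?_
    · rw [← c1]
      refine Finset.sum_le_card_nsmul _ _ _ ?_
      intro p hp
      simp only [Finset.mem_filter] at hp
      exact (hg p hp.1.1 (by omega)).1
    · rw [show r - 1 = (((X.filter (fun p => on p l))).filter (fun p => ¬ cnt on Λ p = 1)).card by omega]
      refine Finset.sum_le_card_nsmul _ _ _ ?_
      intro p hp
      simp only [Finset.mem_filter] at hp
      exact (hg p hp.1.1 (hpos l hl p hp.1.2)).2 hp.2
  have hsum1 : ∀ l ∈ Λ, ∀ μ, ∀ g : α → ℕ,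
      (∀ p ∈ X, 1 ≤ cnt on Λ p → g p ≤ μ + 1 ∧ (cnt on Λ p ≠ 1 → g p ≤ μ)) →
      (∃ p ∈ X, on p l ∧ g p + 1 ≤ μ + 1 ∧ (cnt on Λ p ≠ 1 → g p + 1 ≤ μ)) →
      lineSum on X l g + 1 ≤ (s - r + 1) * (μ + 1) + (r - 1) * μ := by
    rintro l hl μ g hg ⟨p, hpX, hpl, hp1, hp2⟩
    have := hsum l hl μ (fun q => g q + if q = p then 1 else 0) (by
      intro q hq hc
      by_cases hqp : q = p
      · subst hqp; simpa using ⟨by omega, fun h => hp2 h⟩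
      · simpa [hqp] using hg q hq hc)
    refine le_trans (le_of_eq ?_) this
    unfold lineSum
    rw [Finset.sum_add_distrib]
    congr 1
    rw [Finset.sum_ite_eq', if_pos (by simp [hpX, hpl])]
  have harith : ∀ μ, (s - r + 1) * (μ + 1) + (r - 1) * μ + (r - 1) = (μ + 1) * s := by
    intro μ
    obtain ⟨d, rfl⟩ : ∃ d, s = r + d := ⟨s - r, by omega⟩
    obtain ⟨q, hq⟩ : ∃ q, r = q + 1 := ⟨r - 1, by omega⟩
    rw [hq, Nat.add_sub_cancel, Nat.add_sub_cancel_left]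
    ring
  set A := (X.filter (fun p => on p M)).filter (fun p => cnt on Λ p = 1) with hA
  have hAc : A.card = s - r + 1 := hsing M hM
  have hzero : ∀ p, cnt on Λ p = 0 → ¬ on p M := by
    intro p hp hM'
    have := hpos M hM p hM'
    omega
  have key : ∀ μ : ℕ, ∀ S : Finset α, S ⊆ A → (A \ S).card ≤ μ + 1 →
      Good on X (fun p => μ + 2 - cnt on Λ p - if p ∈ S then 1 else 0) ((μ + 2) * s - 1 - r) := by
    intro μ
    induction μ with
    | zero =>
      intro S hSA hS
      obtain ⟨Q, hQA, hQ⟩ : ∃ Q ∈ A, A ⊆ insert Q S := by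
        rcases (A \ S).eq_empty_or_nonempty with he | ⟨Q, hQ⟩
        · obtain ⟨Q, hQ⟩ : A.Nonempty := by rw [← Finset.card_pos]; omega
          exact ⟨Q, hQ, (Finset.sdiff_eq_empty_iff_subset.1 he).trans (Finset.subset_insert _ _)⟩
        · refine ⟨Q, (Finset.mem_sdiff.1 hQ).1, ?_⟩
          intro x hx
          by_cases hxS : x ∈ S
          · simp [hxS]
          · have := Finset.card_le_one.1 hS x (by simp [hx, hxS]) Q hQ
            simp [this]
      have hQ' := hQA
      simp only [hA, Finset.mem_filter] at hQ'
      have e : (0 + 2) * s - 1 - r = 1 * s - 1 + (s - r) := by omega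
      rw [e]
      refine hKC.nphase join (Q := Q) le_rfl (by omega) hX'X hline _ ?_ ?_ ?_
      · intro p _; split_ifs <;> omega
      · intro p hp hpX
        have : cnt on Λ p ≠ 0 := by intro h0; exact hpX (by simp [hX', hp, h0])
        split_ifs <;> omega
      · intro g' hg hg1 hgQ
        have hM0 : ∀ p ∈ X, on p M → g' p = 0 := by
          intro p hp hpM
          have a1 := hg p
          have a2 := hpos M hM p hpM
          by_cases hc : cnt on Λ p = 1
          · have : p ∈ A := by simp [hA, hp, hpM, hc]
            have := hQ this
            rw [Finset.mem_insert] at this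
            rcases this with rfl | hpS
            · omega
            · rw [if_pos hpS] at a1; omega
          · omega
        have e : 1 * s - 1 = (s - r) + T.card := by omega
        rw [e]
        refine Good.strips T ?_ ?_
        · intro l hl
          have := hsum l (Finset.mem_of_mem_erase hl) 0 g' (by
            intro p hp hc
            have := hg1 p hp
            have := hg p
            refine ⟨by omega, fun _ => by omega⟩)
          simpa using this
        · refine hKC.final hX'X _ ?_ ?_
          · intro p hp
            have := hg1 p (hX'X hp)
            omega
          · intro p hp hpX
            have h0 : cnt on Λ p ≠ 0 := by intro h0; exact hpX (by simp [hX', hp, h0])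
            have a1 := hg1 p hp
            by_cases hpM : on p M
            · have := hM0 p hp hpM; omega
            · have := hcT p
              rw [if_neg hpM] at this
              omega
    | succ μ ih =>
      intro S hSA hS
      obtain ⟨Q, hQA, hQ⟩ : ∃ Q ∈ A, (A \ insert Q S).card ≤ μ + 1 := by
        rcases (A \ S).eq_empty_or_nonempty with he | ⟨Q, hQ⟩
        · obtain ⟨Q, hQ⟩ : A.Nonempty := by rw [← Finset.card_pos]; omega
          refine ⟨Q, hQ, ?_⟩
          rw [Finset.sdiff_eq_empty_iff_subset.2 ((Finset.sdiff_eq_empty_iff_subset.1 he).trans (Finset.subset_insert _ _))]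
          simp
        · refine ⟨Q, (Finset.mem_sdiff.1 hQ).1, ?_⟩
          rw [Finset.sdiff_insert, Finset.card_erase_of_mem hQ]
          omega
      have hQ' := hQA
      simp only [hA, Finset.mem_filter] at hQ'
      have hbig : 2 * s ≤ (μ + 1 + 1) * s := Nat.mul_le_mul_right _ (by omega)
      have e : (μ + 1 + 2) * s - 1 - r = (μ + 1 + 1) * s - 1 + (s - r) := by
        have : (μ + 1 + 2) * s = (μ + 1 + 1) * s + s := by ring
        omega
      rw [e]
      have har := harith (μ + 1)
      refine hKC.nphase join (Q := Q) (by omega) (by omega) hX'X hline _ ?_ ?_ ?_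
      · intro p _; split_ifs <;> omega
      · intro p hp hpX
        have : cnt on Λ p ≠ 0 := by intro h0; exact hpX (by simp [hX', hp, h0])
        split_ifs <;> omega
      · intro g' hg hg1 hgQ
        have e : (μ + 1 + 1) * s - 1 = (μ + 2) * s - 1 - r + T.card + 1 := by
          have : (μ + 1 + 1) * s = (μ + 2) * s := by ring
          omega
        rw [e]
        have hgb : ∀ p ∈ X, 1 ≤ cnt on Λ p → g' p ≤ μ + 1 + 1 ∧ (cnt on Λ p ≠ 1 → g' p ≤ μ + 1) := by
          intro p hp hc
          have := hg p
          exact ⟨by omega, fun _ => by omega⟩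
        have e2 : (μ + 1 + 1) * s = (μ + 2) * s := by ring
        refine Good.strip _ _ M ?_ (Good.strips T ?_ ?_)
        · have := hsum1 M hM (μ + 1) g' hgb ⟨Q, hQ'.1.1, hQ'.1.2, by omega, fun h => absurd hQ'.2 h⟩
          omega
        · intro l hl
          obtain ⟨p, hp, hpl, hpM⟩ := hmeet l hl
          have hc2 : 2 ≤ cnt on Λ p := by
            have : 1 ≤ cnt on T p := by
              unfold cnt
              exact Finset.card_pos.2 ⟨l, by simp [hl, hpl]⟩
            have := hcT p
            rw [if_pos hpM] at this
            omega
          have hst : ∀ q, stripF on M g' q ≤ g' q := by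
            intro q; unfold stripF; split_ifs <;> omega
          have := hsum1 l (Finset.mem_of_mem_erase hl) (μ + 1) (stripF on M g') (by
            intro q hq hc
            exact ⟨(hst q).trans (hgb q hq hc).1, fun h => (hst q).trans ((hgb q hq hc).2 h)⟩)
            ⟨p, hp, hpl, by 
              have := hg p
              unfold stripF; rw [if_pos hpM]
              omega, fun _ => by
              have := hg p
              unfold stripF; rw [if_pos hpM]
              omega⟩
          omega
        · refine (ih (insert Q S) (Finset.insert_subset hQA hSA) hQ).mono ?_
          intro p hp
          have a1 := hg1 p hp
          have a2 := hg p
          have a3 := hcT p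
          have a4 : p ∈ insert Q S → cnt on Λ p = 1 := by
            intro hpQ
            have := Finset.insert_subset hQA hSA hpQ
            rw [hA, Finset.mem_filter] at this
            exact this.2
          have a5 : p ∈ insert Q S → on p M := by
            intro hpQ
            have := Finset.insert_subset hQA hSA hpQ
            simp only [hA, Finset.mem_filter] at this
            exact this.1.2
          unfold stripF
          by_cases hpS : p ∈ insert Q S
          · have a4 := a4 hpS
            have a5 := a5 hpS
            rw [if_pos hpS, if_pos a5]
            rw [if_pos a5] at a3
            rcases Finset.mem_insert.1 hpS with rfl | hpS'
            · omega
            · rw [if_pos hpS'] at a2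
              omega
          · rw [if_neg hpS]
            split_ifs with hpM
            · rw [if_pos hpM] at a3; omega
            · rw [if_neg hpM] at a3; omega
  obtain ⟨μ, rfl⟩ : ∃ μ, m = μ + 2 := ⟨m - 2, by omega⟩
  have := key μ ∅ (by simp) (by simp; omega)
  simpa using this
end Comb
section Alg

open MvPolynomial

/-- The linear form with coefficient vector `a`. -/
noncomputable def linForm {K : Type} [Field K] (a : Fin 3 → K) : MvPolynomial (Fin 3) K :=
  ∑ j, C (a j) * X j

theorem linForm_hom {K : Type} [Field K] (a : Fin 3 → K) : (linForm a).IsHomogeneous 1 :=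
  IsHomogeneous.sum _ _ _ fun j _ => isHomogeneous_C_mul_X _ _

theorem exists_linForm {K : Type} [Field K] (g : MvPolynomial (Fin 3) K) (hg : g.IsHomogeneous 1) :
    ∃ a, g = linForm a := by
  rw [← mem_homogeneousSubmodule, homogeneousSubmodule_one_eq_span_X, Submodule.mem_span_range_iff_exists_fun] at hg
  obtain ⟨c, rfl⟩ := hg
  exact ⟨c, by simp [linForm, smul_eq_C_mul]⟩

theorem eval_linForm {K : Type} [Field K] (a x : Fin 3 → K) : eval x (linForm a) = ∑ j, a j * x j := by
  simp [linForm]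

theorem linForm_ne_zero {K : Type} [Field K] {a : Fin 3 → K} (ha : a ≠ 0) : linForm a ≠ 0 := by
  intro h
  apply ha
  ext j
  have := eval_linForm a (Pi.single j 1)
  rw [h] at this
  simpa [Pi.single_apply] using this.symm

/-- The map detecting the order of vanishing at `p`. -/
noncomputable def ordMap {K : Type} [Field K] (p : Fin 3 → K) (i : Fin 3) :
    MvPolynomial (Fin 3) K →ₐ[K] Polynomial (MvPolynomial (Fin 3) K) :=
  aeval fun j => Polynomial.C (C (p j / p i) * X i) +
    Polynomial.X * Polynomial.C (X j - C (p j / p i) * X i)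

theorem ordMap_linForm {K : Type} [Field K] (p : Fin 3 → K) (i : Fin 3) (hi : p i ≠ 0) (a : Fin 3 → K) :
    ordMap p i (linForm a) = Polynomial.C (C ((∑ j, a j * p j) / p i) * X i) +
      Polynomial.X * Polynomial.C (linForm a - C ((∑ j, a j * p j) / p i) * X i) := by
  have e : (∑ j, a j * p j) / p i = ∑ j, a j * (p j / p i) := by
    rw [Finset.sum_div]; exact Finset.sum_congr rfl fun j _ => by ring
  rw [e]
  have hC : ∀ c : K, ordMap p i (C c) = Polynomial.C (C c) := by
    intro c
    exact (ordMap p i).commutes c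
  have hX : ∀ j, ordMap p i (X j) = Polynomial.C (C (p j / p i) * X i) +
    Polynomial.X * Polynomial.C (X j - C (p j / p i) * X i) := by
    intro j; simp [ordMap]
  simp only [linForm, map_sum, map_mul, hC, hX, Fin.sum_univ_three, map_add, map_sub]
  ring

theorem pow_dvd_of_mem {K : Type} [Field K] (P : P2 K) (i : Fin 3) (hi : P.rep i ≠ 0) (k : ℕ)
    (F : MvPolynomial (Fin 3) K) (hF : F ∈ pointIdeal P ^ k) : Polynomial.X ^ k ∣ ordMap P.rep i F := by
  rw [← Ideal.mem_span_singleton, ← Ideal.span_singleton_pow]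
  have : (pointIdeal P) ≤ (Ideal.span {Polynomial.X}).comap (ordMap P.rep i) := by
    unfold pointIdeal
    rw [Ideal.span_le]
    rintro g ⟨hg, hg0⟩
    obtain ⟨a, rfl⟩ := exists_linForm g hg
    rw [eval_linForm] at hg0
    rw [SetLike.mem_coe, Ideal.mem_comap, ordMap_linForm _ _ hi, hg0, Ideal.mem_span_singleton]
    simp
  have h2 := Ideal.pow_right_mono this k hF
  have h3 := Ideal.le_comap_pow (ordMap P.rep i) k h2
  exact h3

theorem sub_mem_pointIdeal {K : Type} [Field K] (P : P2 K) (i : Fin 3) (hi : P.rep i ≠ 0) (j : Fin 3) :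
    X j - C (P.rep j / P.rep i) * X i ∈ pointIdeal P := by
  refine Ideal.subset_span ⟨?_, ?_⟩
  · exact (isHomogeneous_X _ _).sub (isHomogeneous_C_mul_X _ _)
  · simp [hi]

theorem mem_of_pow_dvd {K : Type} [Field K] (P : P2 K) (i : Fin 3) (hi : P.rep i ≠ 0) (k : ℕ)
    (F : MvPolynomial (Fin 3) K) (hF : Polynomial.X ^ k ∣ ordMap P.rep i F) : F ∈ pointIdeal P ^ k := by
  have h1 : ordMap P.rep i F ∈ reesAlgebra (pointIdeal P) := by
    have hC : ∀ x : MvPolynomial (Fin 3) K, Polynomial.C x ∈ reesAlgebra (pointIdeal P) :=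
      fun x => Subalgebra.algebraMap_mem (reesAlgebra (pointIdeal P)) x
    clear hF
    induction F using MvPolynomial.induction_on with
    | C a =>
      have : ordMap P.rep i (C a) = Polynomial.C (C a) := (ordMap P.rep i).commutes a
      rw [this]
      exact hC _
    | add p q hp hq => rw [map_add]; exact add_mem hp hq
    | mul_X p n hp =>
      rw [map_mul]
      refine mul_mem hp ?_
      rw [show ordMap P.rep i (X n) = _ from aeval_X _ _]
      refine add_mem (hC _) ?_
      rw [Polynomial.X_mul_C, Polynomial.C_mul_X_eq_monomial]
      refine reesAlgebra.monomial_mem.2 ?_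
      rw [pow_one]
      exact sub_mem_pointIdeal P i hi n
  have h2 : F = Polynomial.eval 1 (ordMap P.rep i F) := by
    have : (AlgHom.comp ((Polynomial.aeval (1 : MvPolynomial (Fin 3) K)).restrictScalars K) (ordMap P.rep i)) = AlgHom.id K _ := by
      ext j : 1
      simp [ordMap]
    have := congrArg (fun φ => φ F) this
    simpa [Polynomial.aeval_def, Polynomial.eval₂_eq_eval_map] using this.symm
  rw [h2, Polynomial.eval_eq_sum_range]
  refine Ideal.sum_mem _ fun n _ => ?_
  rw [one_pow, mul_one]
  by_cases hn : n < k
  · rw [Polynomial.X_pow_dvd_iff.1 hF n hn]; exact Ideal.zero_mem _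
  · exact Ideal.pow_le_pow_right (by omega) ((mem_reesAlgebra_iff _ _).1 h1 n)

theorem exists_rep_ne {K : Type} [Field K] (P : P2 K) : ∃ i, P.rep i ≠ 0 := by
  by_contra h
  push Not at h
  exact P.rep_nonzero (funext h)

theorem mul_mem_on {K : Type} [Field K] (P : P2 K) {a : Fin 3 → K} (ha : a ≠ 0)
    (haP : ∑ j, a j * P.rep j = 0) (k : ℕ) (G : MvPolynomial (Fin 3) K)
    : linForm a * G ∈ pointIdeal P ^ k ↔ G ∈ pointIdeal P ^ (k - 1) := by
  obtain ⟨i, hi⟩ := exists_rep_ne P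
  constructor
  · intro h
    rcases k with _ | k
    · simp
    apply mem_of_pow_dvd P i hi
    have := pow_dvd_of_mem P i hi _ _ h
    rw [map_mul, ordMap_linForm _ _ hi, haP] at this
    simp only [zero_div, map_zero, zero_mul, sub_zero, zero_add] at this
    rw [pow_succ', mul_assoc, mul_dvd_mul_iff_left Polynomial.X_ne_zero] at this
    refine Prime.pow_dvd_of_dvd_mul_left Polynomial.prime_X _ ?_ this
    rw [Polynomial.X_dvd_iff]
    simpa using linForm_ne_zero ha
  · intro h
    rcases k with _ | k
    · simp
    rw [pow_succ']
    refine Ideal.mul_mem_mul ?_ h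
    exact Ideal.subset_span ⟨linForm_hom a, by rw [eval_linForm]; exact haP⟩

theorem mul_mem_off {K : Type} [Field K] (P : P2 K) {a : Fin 3 → K}
    (haP : ∑ j, a j * P.rep j ≠ 0) (k : ℕ) (G : MvPolynomial (Fin 3) K)
    : linForm a * G ∈ pointIdeal P ^ k ↔ G ∈ pointIdeal P ^ k := by
  obtain ⟨i, hi⟩ := exists_rep_ne P
  constructor
  · intro h
    apply mem_of_pow_dvd P i hi
    have := pow_dvd_of_mem P i hi _ _ h
    rw [map_mul, ordMap_linForm _ _ hi] at this
    refine Prime.pow_dvd_of_dvd_mul_left Polynomial.prime_X _ ?_ this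
    rw [Polynomial.X_dvd_iff]
    simp [haP, hi]
  · intro h; exact Ideal.mul_mem_left _ _ h

end Alg
section Alg2

open MvPolynomial

theorem hom_eval_smul {K : Type} [Field K] {F : MvPolynomial (Fin 3) K} {t : ℕ} (hF : F.IsHomogeneous t)
    (c : K) (x : Fin 3 → K) : eval (c • x) F = c ^ t * eval x F := by
  rw [eval_eq', eval_eq', Finset.mul_sum]
  refine Finset.sum_congr rfl fun d hd => ?_
  have h1 : d.degree = t := (hF.degree_eq_sum_deg_support hd).symm
  rw [Finsupp.degree_eq_sum] at h1
  simp only [Pi.smul_apply, smul_eq_mul, mul_pow, Finset.prod_mul_distrib, Finset.prod_pow_eq_pow_sum, h1]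
  ring

theorem mem_points_iff {K : Type} [Field K] (L : ProjLine K) (P : P2 K) :
    P ∈ L.points ↔ P.rep ∈ L.toSubmodule := by
  unfold ProjLine.points
  rw [Set.mem_setOf_eq, Projectivization.submodule_eq, Submodule.span_singleton_le_iff_mem]

theorem eq_of_rep_smul {K : Type} [Field K] (P Q : P2 K) (c : K) (h : P.rep = c • Q.rep) : P = Q := by
  rw [← P.mk_rep, ← Q.mk_rep, Projectivization.mk_eq_mk_iff']
  exact ⟨c, h.symm⟩

theorem line_eq {K : Type} [Field K] (L : ProjLine K) :
    ∃ a : Fin 3 → K, a ≠ 0 ∧ ∀ x, x ∈ L.toSubmodule ↔ ∑ j, a j * x j = 0 := by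
  have hlt : L.toSubmodule < ⊤ := by
    refine lt_top_iff_ne_top.2 fun h => ?_
    have := L.finrank_eq_two
    rw [h, finrank_top] at this
    simp at this
  obtain ⟨φ, hφ, hle⟩ := Submodule.exists_le_ker_of_lt_top _ hlt
  have heq : L.toSubmodule = LinearMap.ker φ := by
    refine Submodule.eq_of_le_of_finrank_le hle ?_
    have h1 := LinearMap.finrank_range_add_finrank_ker φ
    have h2 : LinearMap.range φ = ⊤ := LinearMap.range_eq_top.2 (LinearMap.surjective hφ)
    rw [h2, finrank_top] at h1
    simp at h1
    rw [L.finrank_eq_two]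
    omega
  have hx : ∀ x, φ x = ∑ j, φ (Pi.single j 1) * x j := by
    intro x
    conv_lhs => rw [← Finset.univ_sum_single x]
    rw [map_sum]
    refine Finset.sum_congr rfl fun j _ => ?_
    rw [show (Pi.single j (x j) : Fin 3 → K) = x j • Pi.single j 1 by
      rw [← Pi.single_smul]; simp, map_smul, smul_eq_mul, mul_comm]
  refine ⟨fun j => φ (Pi.single j 1), ?_, ?_⟩
  · intro h
    apply hφ
    refine LinearMap.ext fun x => ?_
    rw [hx]
    have : ∀ j, φ (Pi.single j 1) = 0 := fun j => congrFun h j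
    simp [this]
  · intro x
    rw [heq, LinearMap.mem_ker, hx]

theorem line_param {K : Type} [Field K] [Infinite K] (L : ProjLine K) (X : Finset (P2 K)) :
    ∃ u v : Fin 3 → K, (∀ x, x ∈ L.toSubmodule ↔ ∃ α β : K, x = α • u + β • v) ∧
      ∃ z : P2 K → K, ∀ P ∈ X, P ∈ L.points → ∃ c : K, c ≠ 0 ∧ P.rep = c • (u + z P • v) := by
  classical
  have b := Module.finBasisOfFinrankEq K L.toSubmodule L.finrank_eq_two
  set u : Fin 3 → K := (b 0).1 with hu
  set v : Fin 3 → K := (b 1).1 with hv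
  have hspan : ∀ x ∈ L.toSubmodule, ∃ α β : K, x = α • u + β • v := by
    intro x hx
    have := b.sum_repr ⟨x, hx⟩
    rw [Fin.sum_univ_two] at this
    exact ⟨b.repr ⟨x, hx⟩ 0, b.repr ⟨x, hx⟩ 1, (congrArg Subtype.val this).symm⟩
  choose! α β hαβ using hspan
  obtain ⟨c, hc⟩ := Infinite.exists_notMem_finset (X.image fun P => α P.rep / β P.rep)
  refine ⟨u, v + c • u, ?_, fun P => β P.rep / (α P.rep - β P.rep * c), ?_⟩
  · intro x
    constructor
    · intro hx
      refine ⟨α x - β x * c, β x, ?_⟩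
      conv_lhs => rw [hαβ x hx]
      module
    · rintro ⟨a, b', rfl⟩
      have h1 : u ∈ L.toSubmodule := (b 0).2
      have h2 : v ∈ L.toSubmodule := (b 1).2
      exact add_mem (Submodule.smul_mem _ _ h1)
        (Submodule.smul_mem _ _ (add_mem h2 (Submodule.smul_mem _ _ h1)))
  · intro P hP hPL
    rw [mem_points_iff] at hPL
    have h1 := hαβ _ hPL
    have hne : α P.rep - β P.rep * c ≠ 0 := by
      intro h0
      by_cases hb : β P.rep = 0
      · rw [hb] at h0 h1
        have : α P.rep = 0 := by simpa using h0
        rw [this] at h1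
        exact P.rep_nonzero (by simpa using h1)
      · apply hc
        rw [Finset.mem_image]
        refine ⟨P, hP, ?_⟩
        field_simp
        linear_combination h0
    refine ⟨_, hne, ?_⟩
    rw [smul_add, smul_smul, mul_div_cancel₀ _ hne]
    conv_lhs => rw [h1]
    module

/-- Restriction to the parametrized line. -/
noncomputable def resMap {K : Type} [Field K] (u v : Fin 3 → K) :
    MvPolynomial (Fin 3) K →ₐ[K] Polynomial K :=
  aeval fun j => Polynomial.C (u j) + Polynomial.X * Polynomial.C (v j)

theorem resMap_eval {K : Type} [Field K] (u v : Fin 3 → K) (F : MvPolynomial (Fin 3) K) (c : K) :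
    (resMap u v F).eval c = eval (u + c • v) F := by
  have : (Polynomial.aeval c).comp (resMap u v) = aeval (u + c • v) := by
    ext j
    simp [resMap]
    ring
  have := congrArg (fun φ => φ F) this
  simpa [Polynomial.aeval_def, MvPolynomial.aeval_eq_eval] using this

theorem resMap_dvd {K : Type} [Field K] (u v : Fin 3 → K) (P : P2 K) (z c : K) (hc : c ≠ 0)
    (hP : P.rep = c • (u + z • v)) (k : ℕ)
    (F : MvPolynomial (Fin 3) K) (hF : F ∈ pointIdeal P ^ k) :
    (Polynomial.X - Polynomial.C z) ^ k ∣ resMap u v F := by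
  rw [← Ideal.mem_span_singleton, ← Ideal.span_singleton_pow]
  have : (pointIdeal P) ≤ (Ideal.span {Polynomial.X - Polynomial.C z}).comap (resMap u v) := by
    unfold pointIdeal
    rw [Ideal.span_le]
    rintro g ⟨hg, hg0⟩
    rw [SetLike.mem_coe, Ideal.mem_comap, Ideal.mem_span_singleton, Polynomial.dvd_iff_isRoot,
      Polynomial.IsRoot, resMap_eval]
    rw [hP, hom_eval_smul hg] at hg0
    simpa [hc] using hg0
  exact Ideal.le_comap_pow (resMap u v) k (Ideal.pow_right_mono this k hF)

theorem resMap_degree {K : Type} [Field K] (u v : Fin 3 → K) {t : ℕ}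
    (F : MvPolynomial (Fin 3) K) (hF : F.IsHomogeneous t) : (resMap u v F).natDegree ≤ t := by
  have h1 : ∀ j, (Polynomial.C (u j) + Polynomial.X * Polynomial.C (v j)).natDegree ≤ 1 := by
    intro j
    rw [Polynomial.X_mul_C, add_comm]
    exact Polynomial.natDegree_linear_le
  have := MvPolynomial.aeval_natDegree_le F hF.totalDegree_le _ h1
  rw [mul_one] at this
  exact this

theorem dvd_of_resMap_zero {K : Type} [Field K] [Infinite K] {L : ProjLine K} {u v a : Fin 3 → K}
    (ha : a ≠ 0) (haL : ∀ x, x ∈ L.toSubmodule ↔ ∑ j, a j * x j = 0)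
    (huv : ∀ x, x ∈ L.toSubmodule ↔ ∃ α β : K, x = α • u + β • v) {t : ℕ}
    (F : MvPolynomial (Fin 3) K) (hF : F.IsHomogeneous t) (h0 : resMap u v F = 0) :
    linForm a ∣ F := by
  -- vanishing on the line
  have h1 : ∀ c : K, eval (u + c • v) F = 0 := by
    intro c; rw [← resMap_eval, h0]; simp
  have h2 : ∀ α : K, α ≠ 0 → ∀ β : K, eval (α • u + β • v) F = 0 := by
    intro α hα β
    have : α • u + β • v = α • (u + (β / α) • v) := by
      rw [smul_add, smul_smul, mul_div_cancel₀ _ hα]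
    rw [this, hom_eval_smul hF, h1, mul_zero]
  have h3 : ∀ β : K, eval (β • v) F = 0 := by
    intro β
    have h4 : resMap (β • v) u F = 0 := by
      refine Polynomial.eq_zero_of_infinite_isRoot _ ?_
      refine Set.Infinite.mono ?_ (Set.Finite.infinite_compl (Set.finite_singleton (0 : K)))
      intro α hα
      rw [Set.mem_setOf_eq, Polynomial.IsRoot, resMap_eval, add_comm]
      exact h2 α hα β
    have := resMap_eval (β • v) u F 0
    rw [h4] at this
    simpa using this.symm
  have h5 : ∀ x ∈ L.toSubmodule, eval x F = 0 := by
    intro x hx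
    obtain ⟨α, β, rfl⟩ := (huv x).1 hx
    by_cases hα : α = 0
    · rw [hα, zero_smul, zero_add]; exact h3 β
    · exact h2 α hα β
  obtain ⟨i, hi⟩ : ∃ i, a i ≠ 0 := by
    by_contra h; push Not at h; exact ha (funext h)
  -- projection onto the line
  let w : Fin 3 → K := Pi.single i (a i)⁻¹
  let Ψ : MvPolynomial (Fin 3) K →ₐ[K] MvPolynomial (Fin 3) K := aeval fun j => X j - C (w j) * linForm a
  have h6 : ∀ G, linForm a ∣ G - Ψ G := by
    intro G
    rw [← Ideal.mem_span_singleton, ← Ideal.Quotient.mk_eq_mk_iff_sub_mem]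
    have : (Ideal.Quotient.mkₐ K (Ideal.span {linForm a})) = (Ideal.Quotient.mkₐ K (Ideal.span {linForm a})).comp Ψ := by
      ext j : 1
      simp only [Ψ, AlgHom.comp_apply, aeval_X, Ideal.Quotient.mkₐ_eq_mk]
      rw [Ideal.Quotient.mk_eq_mk_iff_sub_mem, Ideal.mem_span_singleton]
      exact ⟨C (w j), by ring⟩
    exact congrArg (fun φ => φ G) this
  have h7 : Ψ F = 0 := by
    apply MvPolynomial.funext
    intro x
    have : eval x (Ψ F) = eval (x - (∑ j, a j * x j) • w) F := by
      have : (aeval x).comp Ψ = (aeval (x - (∑ j, a j * x j) • w) : MvPolynomial (Fin 3) K →ₐ[K] K) := by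
        ext j
        simp [Ψ, eval_linForm, MvPolynomial.aeval_eq_eval, mul_comm]
      have := congrArg (fun φ => φ F) this
      simpa [MvPolynomial.aeval_eq_eval] using this
    rw [this, map_zero]
    apply h5
    rw [haL]
    simp only [Pi.sub_apply, Pi.smul_apply, smul_eq_mul, mul_sub, Finset.sum_sub_distrib]
    have : ∑ j, a j * ((∑ j, a j * x j) * w j) = (∑ j, a j * x j) * ∑ j, a j * w j := by
      rw [Finset.mul_sum]; exact Finset.sum_congr rfl fun j _ => by ring
    rw [this]
    have : ∑ j, a j * w j = 1 := by simp [w, Pi.single_apply, hi]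
    rw [this]; ring
  have := h6 F
  rwa [h7, sub_zero] at this

theorem hom_factor {K : Type} [Field K] {a : Fin 3 → K} {t : ℕ}
    {F : MvPolynomial (Fin 3) K} (hF : F.IsHomogeneous (t + 1)) (h : linForm a ∣ F) :
    ∃ G, G.IsHomogeneous t ∧ F = linForm a * G := by
  obtain ⟨G, rfl⟩ := h
  refine ⟨homogeneousComponent t G, homogeneousComponent_isHomogeneous _ _, ?_⟩
  letI : GradedAlgebra (homogeneousSubmodule (Fin 3) K) := MvPolynomial.gradedAlgebra
  have := DirectSum.coe_decompose_mul_add_of_left_mem (homogeneousSubmodule (Fin 3) K) (i := 1) (j := t) (b := G)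
    ((mem_homogeneousSubmodule _ _).2 (linForm_hom a))
  rw [add_comm t 1] at hF
  rw [DirectSum.decompose_of_mem_same _ ((mem_homogeneousSubmodule _ _).2 hF)] at this
  rw [this]
  congr 1
  exact decomposition.decompose'_apply G t

end Alg2
section Alg3

open MvPolynomial

theorem finrank_hom {K : Type} [Field K] (t : ℕ) :
    Module.finrank K ↥(homogeneousSubmodule (Fin 3) K t) = (t + 2).choose 2 := by
  have e : {d : Fin 3 →₀ ℕ | d.degree = t} = ((Finset.univ : Finset (Fin 3)).finsuppAntidiag t : Set _) := by
    ext d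
    simp [Finset.mem_finsuppAntidiag, Finsupp.degree_eq_sum]
  have e2 : homogeneousSubmodule (Fin 3) K t = restrictSupport K {d : Fin 3 →₀ ℕ | d.degree = t} := by
    ext F
    rw [homogeneousSubmodule_eq_finsupp_supported]
    rfl
  rw [e2, Module.finrank_eq_nat_card_basis (basisRestrictSupport K _), e]
  rw [Nat.card_eq_fintype_card]
  simp only [Finset.coe_sort_coe, Fintype.card_coe]
  rw [Finset.card_finsuppAntidiag_nat_eq_choose]
  have e3 : (Finset.univ : Finset (Fin 3)).card + t - 1 = t + 2 := by simp; omega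
  rw [e3, Nat.choose_symm_add]

instance homFin {K : Type} [Field K] (t : ℕ) : FiniteDimensional K ↥(homogeneousSubmodule (Fin 3) K t) :=
  Module.Finite.iff_fg.2 (homogeneousSubmodule_fg (Fin 3) K t)

/-- Degree `t` forms with assigned multiplicities. -/
noncomputable def VV {K : Type} [Field K] (X : Finset (P2 K)) (f : P2 K → ℕ) (t : ℕ) :
    Submodule K (MvPolynomial (Fin 3) K) :=
  Submodule.restrictScalars K (⨅ p ∈ X, pointIdeal p ^ f p) ⊓ homogeneousSubmodule (Fin 3) K t

theorem mem_VV {K : Type} [Field K] (X : Finset (P2 K)) (f : P2 K → ℕ) (t : ℕ) (F : MvPolynomial (Fin 3) K) :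
    F ∈ VV X f t ↔ (∀ p ∈ X, F ∈ pointIdeal p ^ f p) ∧ F.IsHomogeneous t := by
  simp [VV, Submodule.mem_inf, Ideal.mem_iInf]

instance VVFin {K : Type} [Field K] (X : Finset (P2 K)) (f : P2 K → ℕ) (t : ℕ) :
    FiniteDimensional K (VV X f t) :=
  Submodule.finiteDimensional_of_le (inf_le_right : VV X f t ≤ homogeneousSubmodule (Fin 3) K t)

noncomputable def DD {K : Type} [Field K] (X : Finset (P2 K)) (f : P2 K → ℕ) : ℕ → ℕ
  | 0 => 0
  | t + 1 => Module.finrank K (VV X f t)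

/-- incidence -/
def onL {K : Type} [Field K] (p : P2 K) (L : ProjLine K) : Prop := p ∈ L.points

theorem mul_mem_strip {K : Type} [Field K] {a : Fin 3 → K} {L : ProjLine K} (ha : a ≠ 0)
    (haL : ∀ x, x ∈ L.toSubmodule ↔ ∑ j, a j * x j = 0) (f : P2 K → ℕ) (P : P2 K)
    (G : MvPolynomial (Fin 3) K) :
    linForm a * G ∈ pointIdeal P ^ f P ↔ G ∈ pointIdeal P ^ (stripF onL L f P) := by
  unfold stripF onL
  split_ifs with h
  · rw [mem_points_iff, haL] at h
    exact mul_mem_on P ha h _ G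
  · rw [mem_points_iff, haL] at h
    exact mul_mem_off P h _ G

theorem DD_lower_strip {K : Type} [Field K] (X : Finset (P2 K)) (f : P2 K → ℕ) (L : ProjLine K) (n : ℕ) :
    DD X (stripF onL L f) n ≤ DD X f (n + 1) := by
  obtain ⟨a, ha, haL⟩ := line_eq L
  rcases n with _ | t
  · exact Nat.zero_le _
  · change Module.finrank K (VV X (stripF onL L f) t) ≤ Module.finrank K (VV X f (t + 1))
    have hinj : Function.Injective (LinearMap.mulLeft K (linForm a)) := by
      intro x y h
      exact mul_left_cancel₀ (linForm_ne_zero ha) h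
    rw [(Submodule.equivMapOfInjective _ hinj (VV X (stripF onL L f) t)).finrank_eq]
    refine Submodule.finrank_mono ?_
    rintro _ ⟨G, hG, rfl⟩
    rw [SetLike.mem_coe, mem_VV] at hG
    rw [mem_VV, LinearMap.mulLeft_apply]
    refine ⟨fun p hp => (mul_mem_strip ha haL f p G).2 (hG.1 p hp), ?_⟩
    rw [add_comm]
    exact (linForm_hom a).mul hG.2

open Classical in
theorem DD_upper {K : Type} [Field K] [Infinite K] (X : Finset (P2 K)) (f : P2 K → ℕ) (L : ProjLine K) (n : ℕ) :
    DD X f (n + 1) ≤ DD X (stripF onL L f) n + (n + 1 - lineSum onL X L f) := by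
  obtain ⟨a, ha, haL⟩ := line_eq L
  obtain ⟨u, v, huv, z, hz⟩ := line_param L X
  change Module.finrank K (VV X f n) ≤ _
  set ρ : VV X f n →ₗ[K] Polynomial K := (resMap u v).toLinearMap ∘ₗ (VV X f n).subtype with hρ
  rw [← LinearMap.finrank_range_add_finrank_ker ρ, add_comm]
  refine Nat.add_le_add ?_ ?_
  · rcases n with _ | t
    · change _ ≤ 0
      rw [Nat.le_zero, Submodule.finrank_eq_zero, LinearMap.ker_eq_bot']
      rintro ⟨F, hF⟩ h0
      rw [mem_VV] at hF
      have hd := dvd_of_resMap_zero ha haL huv F hF.2 h0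
      have h1 := hF.2.totalDegree_le
      by_contra hne
      have hne' : F ≠ 0 := by simpa using hne
      obtain ⟨G, rfl⟩ := hd
      rw [totalDegree_mul_of_isDomain (left_ne_zero_of_mul hne') (right_ne_zero_of_mul hne'),
        (linForm_hom a).totalDegree (linForm_ne_zero ha)] at h1
      omega
    · change _ ≤ Module.finrank K (VV X (stripF onL L f) t)
      rw [(Submodule.equivMapOfInjective _ (VV X f (t + 1)).injective_subtype _).finrank_eq]
      refine le_trans (Submodule.finrank_mono (t := (VV X (stripF onL L f) t).map (LinearMap.mulLeft K (linForm a))) ?_) 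
        (Submodule.finrank_map_le _ _)
      rintro _ ⟨⟨F, hF⟩, h0, rfl⟩
      rw [mem_VV] at hF
      obtain ⟨G, hG, rfl⟩ := hom_factor hF.2 (dvd_of_resMap_zero ha haL huv F hF.2 h0)
      refine ⟨G, ?_, rfl⟩
      rw [SetLike.mem_coe, mem_VV]
      exact ⟨fun p hp => (mul_mem_strip ha haL f p G).1 (hF.1 p hp), hG⟩
  · set Y := X.filter (fun p => onL p L) with hY
    set D : Polynomial K := ∏ p ∈ Y, (Polynomial.X - Polynomial.C (z p)) ^ f p with hD
    have hDm : D.Monic := Polynomial.monic_prod_of_monic _ _ fun p _ => (Polynomial.monic_X_sub_C _).pow _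
    have hDd : D.natDegree = lineSum onL X L f := by
      rw [hD, Polynomial.natDegree_prod_of_monic _ _ fun p _ => (Polynomial.monic_X_sub_C _).pow _]
      unfold lineSum
      refine Finset.sum_congr rfl fun p _ => ?_
      simp
    have hle : LinearMap.range ρ ≤ (Polynomial.degreeLT K (n + 1 - lineSum onL X L f)).map (LinearMap.mulLeft K D) := by
      rintro _ ⟨⟨F, hF⟩, rfl⟩
      rw [mem_VV] at hF
      change resMap u v F ∈ _
      have hdvd : D ∣ resMap u v F := by
        refine Finset.prod_dvd_of_coprime ?_ ?_
        · intro p hp q hq hpq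
          refine IsCoprime.pow ?_
          refine Polynomial.isCoprime_X_sub_C_of_isUnit_sub ?_
          rw [isUnit_iff_ne_zero, sub_ne_zero]
          intro hzz
          apply hpq
          simp only [hY, Finset.coe_filter, Set.mem_setOf_eq] at hp hq
          obtain ⟨c, hc, h1⟩ := hz p hp.1 hp.2
          obtain ⟨d, hd, h2⟩ := hz q hq.1 hq.2
          refine eq_of_rep_smul p q (c / d) ?_
          rw [h1, h2, hzz, smul_smul, div_mul_cancel₀ _ hd]
        · intro p hp
          simp only [hY, Finset.mem_filter] at hp
          obtain ⟨c, hc, h1⟩ := hz p hp.1 hp.2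
          exact resMap_dvd u v p _ c hc h1 _ _ (hF.1 p hp.1)
      obtain ⟨E, hE⟩ := hdvd
      refine ⟨E, ?_, hE.symm⟩
      have hdeg := resMap_degree u v F hF.2
      rw [SetLike.mem_coe, Polynomial.mem_degreeLT]
      by_cases hE0 : E = 0
      · rw [hE0, Polynomial.degree_zero]; exact WithBot.bot_lt_coe _
      · rw [hE, hDm.natDegree_mul' hE0, hDd] at hdeg
        rw [Polynomial.degree_eq_natDegree hE0]
        exact_mod_cast (by omega)
    have hfd : FiniteDimensional K (Polynomial.degreeLT K (n + 1 - lineSum onL X L f)) :=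
      Module.Finite.equiv (Polynomial.degreeLTEquiv K _).symm
    refine (Submodule.finrank_mono hle).trans ((Submodule.finrank_map_le _ _).trans ?_)
    rw [(Polynomial.degreeLTEquiv K _).finrank_eq]
    simp

end Alg3
section Alg4

open MvPolynomial

/-- Shear moving a point to a coordinate point. -/
noncomputable def shear {K : Type} [Field K] (c : Fin 3 → K) (i : Fin 3) :
    MvPolynomial (Fin 3) K →ₐ[K] MvPolynomial (Fin 3) K :=
  aeval fun j => if j = i then X i else X j + C (c j) * X i

theorem shear_hom {K : Type} [Field K] (c : Fin 3 → K) (i : Fin 3) {F : MvPolynomial (Fin 3) K} {t : ℕ}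
    (hF : F.IsHomogeneous t) : (shear c i F).IsHomogeneous t := by
  have := hF.aeval (n := 1) (fun j => if j = i then (X i : MvPolynomial (Fin 3) K) else X j + C (c j) * X i) (by
    intro j
    split_ifs
    · exact isHomogeneous_X _ _
    · exact (isHomogeneous_X _ _).add (isHomogeneous_C_mul_X _ _))
  rwa [one_mul] at this

theorem shear_inv {K : Type} [Field K] (c : Fin 3 → K) (i : Fin 3) (F : MvPolynomial (Fin 3) K) :
    shear (-c) i (shear c i F) = F := by
  have : (shear (-c) i).comp (shear c i) = AlgHom.id K _ := by
    refine MvPolynomial.algHom_ext fun j => ?_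
    have hC : ∀ c' : K, shear (-c) i (C c') = C c' := fun c' => (shear (-c) i).commutes c'
    by_cases h : j = i
    · simp [shear, h]
    · simp only [AlgHom.comp_apply]
      have h1 : shear c i (X j) = X j + C (c j) * X i := by simp [shear, h]
      have h2 : shear (-c) i (X j) = X j + C (-c j) * X i := by simp [shear, h]
      have h3 : shear (-c) i (X i) = X i := by simp [shear]
      rw [h1, map_add, map_mul, hC, h2, h3, map_neg]
      simp
  exact DFunLike.congr_fun this F

/-- Exponent vector. -/
noncomputable def expv (i : Fin 3) (t d b : ℕ) : Fin 3 →₀ ℕ :=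
  Finsupp.equivFunOnFinite.symm fun j => if j = i then t - d else if j = i + 1 then b else d - b

theorem expv_eq (i : Fin 3) (t : ℕ) (e : Fin 3 →₀ ℕ) (he : e.degree = t) :
    e = expv i t (e (i + 1) + e (i + 2)) (e (i + 1)) := by
  rw [Finsupp.degree_eq_sum, Fin.sum_univ_three] at he
  ext j
  fin_cases i <;> fin_cases j <;> simp [expv] at * <;> omega

theorem conds {K : Type} [Field K] (P : P2 K) (k t : ℕ) :
    ∃ φ : MvPolynomial (Fin 3) K →ₗ[K] ((Σ d : Fin k, Fin (d.1 + 1)) → K),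
      ∀ F : MvPolynomial (Fin 3) K, F.IsHomogeneous t → φ F = 0 → F ∈ pointIdeal P ^ k := by
  obtain ⟨i, hi⟩ := exists_rep_ne P
  set c : Fin 3 → K := fun j => P.rep j / P.rep i with hc
  refine ⟨LinearMap.pi fun x => (lcoeff K (expv i t x.1 x.2)) ∘ₗ (shear c i).toLinearMap, ?_⟩
  intro F hF h0
  rw [← shear_inv c i F]
  set G := shear c i F with hG
  have hGh : G.IsHomogeneous t := shear_hom c i hF
  rw [G.as_sum, map_sum]
  refine Ideal.sum_mem _ fun e he => ?_
  have hdeg : e.degree = t := by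
    have := hGh (mem_support_iff.1 he)
    rwa [Finsupp.degree_eq_weight_one]
  have hk : k ≤ e (i + 1) + e (i + 2) := by
    by_contra hlt
    push Not at hlt
    have h1 := congrFun h0 ⟨⟨e (i + 1) + e (i + 2), hlt⟩, ⟨e (i + 1), by dsimp only; omega⟩⟩
    change coeff (expv i t (e (i + 1) + e (i + 2)) (e (i + 1))) G = 0 at h1
    rw [← expv_eq i t e hdeg] at h1
    exact mem_support_iff.1 he h1
  have hm : ∀ j, j ≠ i → shear (-c) i (X j) ∈ pointIdeal P := by
    intro j hj
    have h2 : shear (-c) i (X j) = X j + C (-c j) * X i := by simp [shear, hj]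
    rw [h2, map_neg, neg_mul, ← sub_eq_add_neg]
    exact sub_mem_pointIdeal P i hi j
  have hprod : monomial e (coeff e G) = (C (coeff e G) * X i ^ e i) * (X (i + 1) ^ e (i + 1) * X (i + 2) ^ e (i + 2)) := by
    rw [monomial_eq, Finsupp.prod_fintype _ _ (by simp), Fin.prod_univ_three]
    fin_cases i <;> simp <;> ring
  rw [hprod, map_mul]
  refine Ideal.mul_mem_left _ _ (Ideal.pow_le_pow_right hk ?_)
  rw [map_mul, map_pow, map_pow, pow_add]
  exact Ideal.mul_mem_mul (Ideal.pow_mem_pow (hm _ (by fin_cases i <;> decide)) _)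
    (Ideal.pow_mem_pow (hm _ (by fin_cases i <;> decide)) _)

theorem card_sig (k : ℕ) : Fintype.card (Σ d : Fin k, Fin (d.1 + 1)) = (k + 1).choose 2 := by
  rw [Fintype.card_sigma]
  simp only [Fintype.card_fin]
  rw [Fin.sum_univ_eq_sum_range (fun d => d + 1) k]
  induction k with
  | zero => rfl
  | succ k ih => rw [Finset.sum_range_succ, ih, Nat.choose_succ_succ' (k + 1) 1, Nat.choose_one_right]; ring

theorem DD_lower {K : Type} [Field K] (X : Finset (P2 K)) (f : P2 K → ℕ) (n : ℕ) :
    (n + 1).choose 2 ≤ DD X f n + ∑ p ∈ X, (f p + 1).choose 2 := by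
  rcases n with _ | t
  · simp
  change _ ≤ Module.finrank K (VV X f t) + _
  choose φ hφ using fun p : P2 K => conds p (f p) t
  set Φ : ↥(homogeneousSubmodule (Fin 3) K t) →ₗ[K] ((p : X) → (Σ d : Fin (f p), Fin (d.1 + 1)) → K) :=
    LinearMap.pi fun p : X => φ p ∘ₗ (homogeneousSubmodule (Fin 3) K t).subtype with hΦ
  have h1 := LinearMap.finrank_range_add_finrank_ker Φ
  rw [finrank_hom] at h1
  have h2 : Module.finrank K (LinearMap.range Φ) ≤ ∑ p ∈ X, (f p + 1).choose 2 := by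
    refine (Submodule.finrank_le _).trans ?_
    rw [Module.finrank_pi_fintype]
    simp only [Module.finrank_fintype_fun_eq_card, card_sig]
    rw [Finset.sum_coe_sort X (fun p => (f p + 1).choose 2)]
  have h3 : Module.finrank K (LinearMap.ker Φ) ≤ Module.finrank K (VV X f t) := by
    rw [(Submodule.equivMapOfInjective _ (homogeneousSubmodule (Fin 3) K t).injective_subtype _).finrank_eq]
    refine Submodule.finrank_mono ?_
    rintro _ ⟨⟨F, hF⟩, h0, rfl⟩
    rw [mem_VV]
    refine ⟨fun p hp => hφ p F hF ?_, hF⟩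
    exact congrFun (show Φ ⟨F, hF⟩ = 0 from h0) ⟨p, hp⟩
  have : (t + 1 + 1).choose 2 = (t + 2).choose 2 := rfl
  omega

end Alg4
section Alg5

open MvPolynomial

theorem DD_le {K : Type} [Field K] (X : Finset (P2 K)) (f : P2 K → ℕ) (n : ℕ) :
    DD X f n ≤ (n + 1).choose 2 := by
  rcases n with _ | t
  · simp [DD]
  · change Module.finrank K (VV X f t) ≤ (t + 2).choose 2
    rw [← finrank_hom (K := K) t]
    exact Submodule.finrank_mono inf_le_right

open Classical in
theorem strip_sum {α β : Type} (on : α → β → Prop) (X : Finset α) (l : β) (f : α → ℕ) :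
    ∑ p ∈ X, (f p + 1).choose 2 = ∑ p ∈ X, (stripF on l f p + 1).choose 2 + lineSum on X l f := by
  unfold lineSum
  rw [Finset.sum_filter, ← Finset.sum_add_distrib]
  refine Finset.sum_congr rfl fun p _ => ?_
  unfold stripF
  split_ifs
  · rcases hf : f p with _ | a
    · simp
    · rw [Nat.add_sub_cancel, Nat.choose_succ_succ' (a + 1) 1, Nat.choose_one_right]; ring
  · simp

theorem Good.dim_le {K : Type} [Field K] [Infinite K] {X : Finset (P2 K)} {f : P2 K → ℕ} {n : ℕ}
    (h : Good onL X f n) : DD X f n + ∑ p ∈ X, (f p + 1).choose 2 ≤ (n + 1).choose 2 := by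
  induction h with
  | zero f n h =>
    have : ∑ p ∈ X, (f p + 1).choose 2 = 0 := Finset.sum_eq_zero fun p hp => by simp [h p hp]
    rw [this]
    exact DD_le X f n
  | strip f n l h hg ih =>
    have h1 := DD_upper X f l n
    have h2 := strip_sum onL X l f
    have h3 : (n + 1 + 1).choose 2 = (n + 1) + (n + 1).choose 2 := by
      rw [Nat.choose_succ_succ' (n + 1) 1, Nat.choose_one_right]
    omega

theorem Good.dim_eq {K : Type} [Field K] [Infinite K] {X : Finset (P2 K)} {f : P2 K → ℕ} {n : ℕ}
    (h : Good onL X f n) : DD X f n + ∑ p ∈ X, (f p + 1).choose 2 = (n + 1).choose 2 :=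
  le_antisymm h.dim_le (DD_lower X f n)

theorem pair_line {K : Type} [Field K] (x y : Fin 3 → K) (hx : x ≠ 0) (hy : ∀ a : K, a • x ≠ y) :
    Module.finrank K (Submodule.span K {x, y}) = 2 := by
  have := finrank_span_eq_card ((LinearIndependent.pair_iff' hx).2 hy)
  have e : Set.range ![x, y] = {x, y} := by
    ext z
    simp [eq_comm, or_comm]
  rw [e] at this
  simpa using this

theorem onL_uniq {K : Type} [Field K] (l l' : ProjLine K) (hl : l ≠ l') (p q : P2 K)
    (h1 : onL p l) (h2 : onL p l') (h3 : onL q l) (h4 : onL q l') : p = q := by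
  unfold onL at *
  rw [mem_points_iff] at *
  by_contra hpq
  apply hl
  have hr := pair_line p.rep q.rep p.rep_nonzero (fun a ha => hpq (eq_of_rep_smul q p a ha.symm).symm)
  have e1 : Submodule.span K {p.rep, q.rep} = l.toSubmodule := by
    refine Submodule.eq_of_le_of_finrank_eq ?_ (hr.trans l.finrank_eq_two.symm)
    rw [Submodule.span_le]
    rintro _ (rfl | rfl) <;> assumption
  have e2 : Submodule.span K {p.rep, q.rep} = l'.toSubmodule := by
    refine Submodule.eq_of_le_of_finrank_eq ?_ (hr.trans l'.finrank_eq_two.symm)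
    rw [Submodule.span_le]
    rintro _ (rfl | rfl) <;> assumption
  cases l; cases l'
  simp only [ProjLine.mk.injEq]
  exact e1.symm.trans e2

theorem onL_join {K : Type} [Field K] (p q : P2 K) : ∃ l : ProjLine K, onL p l ∧ onL q l := by
  by_cases h : ∀ a : K, a • p.rep ≠ q.rep
  · refine ⟨⟨_, pair_line _ _ p.rep_nonzero h⟩, ?_, ?_⟩ <;> unfold onL <;> rw [mem_points_iff]
    · exact Submodule.subset_span (by simp)
    · exact Submodule.subset_span (by simp)
  · push Not at h
    obtain ⟨a, ha⟩ := h
    have hne : Submodule.span K {p.rep} ≠ ⊤ := by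
      intro ht
      have h1 := finrank_span_singleton (K := K) p.rep_nonzero
      rw [ht, finrank_top] at h1
      simp at h1
    obtain ⟨y, hy⟩ := SetLike.exists_not_mem_of_ne_top _ hne rfl
    rw [Submodule.mem_span_singleton] at hy
    push Not at hy
    have hp : p.rep ∈ Submodule.span K {p.rep, y} := Submodule.subset_span (by simp)
    refine ⟨⟨_, pair_line _ _ p.rep_nonzero hy⟩, ?_, ?_⟩ <;> unfold onL <;> rw [mem_points_iff]
    · exact hp
    · rw [← ha]
      exact Submodule.smul_mem _ _ hp

open Classical in
theorem KC_of_config {K : Type} [Field K] : ∀ (s : ℕ) (Xs : Fin s → Set (P2 K)) (Ls : Fin s → ProjLine K)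
    (_ : ∀ i, (Xs i).ncard = i.1 + 1) (_ : ∀ i, Xs i ⊆ (Ls i).points)
    (_ : ∀ i j : Fin s, j < i → ∀ p ∈ Xs j, p ∉ (Ls i).points) (X : Finset (P2 K))
    (_ : (X : Set (P2 K)) = ⋃ i, Xs i), KC onL s X := by
  intro s
  induction s with
  | zero =>
    intro Xs Ls _ _ _ X h
    have : X = ∅ := by
      rw [← Finset.coe_eq_empty, h]
      simp
    rw [this]
    exact KC.zero
  | succ s ih =>
    intro Xs Ls hc hsub hnot X h
    have hmem : ∀ p, p ∈ X ↔ ∃ i, p ∈ Xs i := by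
      intro p
      rw [← Finset.mem_coe, h, Set.mem_iUnion]
    refine KC.succ s X (Ls (Fin.last s)) ?_ ?_
    · have e : ((X.filter (fun p => onL p (Ls (Fin.last s))) : Finset (P2 K)) : Set (P2 K)) = Xs (Fin.last s) := by
        ext p
        rw [Finset.mem_coe, Finset.mem_filter, hmem]
        constructor
        · rintro ⟨⟨i, hi⟩, hp⟩
          rcases (Fin.le_last i).lt_or_eq with hlt | rfl
          · exact absurd hp (hnot _ i hlt p hi)
          · exact hi
        · intro hp
          exact ⟨⟨_, hp⟩, hsub _ hp⟩
      rw [← Set.ncard_coe_finset, e, hc]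
      simp
    · refine ih (fun i => Xs i.castSucc) (fun i => Ls i.castSucc) (fun i => by simp [hc]) (fun i => hsub _)
        (fun i j hij => hnot _ _ (by simpa using hij)) _ ?_
      ext p
      rw [Finset.mem_coe, Finset.mem_filter, hmem, Set.mem_iUnion]
      constructor
      · rintro ⟨⟨i, hi⟩, hp⟩
        rcases (Fin.le_last i).lt_or_eq with hlt | rfl
        · exact ⟨i.castPred hlt.ne, by simpa using hi⟩
        · exact absurd (hsub _ hi) hp
      · rintro ⟨i, hi⟩
        exact ⟨⟨_, hi⟩, hnot _ _ (Fin.castSucc_lt_last i) p hi⟩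

open Classical in
theorem cnt_sum {α β : Type} {on : α → β → Prop}
    (uniq : ∀ l l' : β, l ≠ l' → ∀ p q : α, on p l → on p l' → on q l → on q l' → p = q)
    (X : Finset α) (T : Finset β) (a : β) (ha : a ∉ T) :
    ∑ p ∈ X.filter (fun p => on p a), cnt on T p ≤ T.card := by
  unfold cnt
  simp only [Finset.card_filter]
  rw [Finset.sum_comm, Finset.card_eq_sum_ones]
  refine Finset.sum_le_sum fun l hl => ?_
  rw [← Finset.card_filter, Finset.card_le_one]
  intro p hp q hq
  simp only [Finset.mem_filter] at hp hq
  exact uniq a l (fun e => ha (e ▸ hl)) p q hp.1.2 hp.2 hq.1.2 hq.2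

open Classical in
theorem bezout {K : Type} [Field K] [Infinite K] {X : Finset (P2 K)} {s m n : ℕ} (hn : n ≤ m * s)
    (T : Finset (ProjLine K)) : (∀ l ∈ T, (X.filter (fun p => onL p l)).card = s) → T.card ≤ n →
    DD X (fun _ => m) n = DD X (fun p => m - cnt onL T p) (n - T.card) := by
  induction T using Finset.induction_on with
  | empty => intro _ _; simp [cnt]
  | insert a T ha ih =>
    intro hT hc
    rw [Finset.card_insert_of_notMem ha] at hc ⊢
    rw [ih (fun l hl => hT l (by simp [hl])) (by omega)]
    have e : (fun p => m - cnt onL (insert a T) p) = stripF onL a (fun p => m - cnt onL T p) := by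
      funext p
      unfold stripF cnt
      rw [Finset.filter_insert]
      split_ifs with h1
      · rw [Finset.card_insert_of_notMem (by simp [ha])]
        dsimp only
        omega
      · rfl
    obtain ⟨n', hn'⟩ : ∃ n', n - T.card = n' + 1 := ⟨n - T.card - 1, by omega⟩
    rw [e, hn', show n - (T.card + 1) = n' by omega]
    refine le_antisymm ?_ (DD_lower_strip _ _ _ _)
    have h1 := DD_upper X (fun p => m - cnt onL T p) a n'
    have h2 : m * s ≤ lineSum onL X a (fun p => m - cnt onL T p) + T.card := by
      refine le_trans ?_ (Nat.add_le_add_left (cnt_sum onL_uniq X T a ha) _)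
      unfold lineSum
      rw [← Finset.sum_add_distrib, ← hT a (by simp), mul_comm, ← smul_eq_mul, ← Finset.sum_const]
      exact Finset.sum_le_sum fun p _ => by omega
    omega

end Alg5

/-- **Theorem (case `d_s = s`, `1 ≤ r < s` lines).** Let `X` be a
k-configuration of type `(1,2,…,s)`, `s ≥ 2`, such that the number `r` of lines
containing exactly `s` points of `X` satisfies `1 ≤ r < s`. Then
`ΔH_{mX}(m·s − 1) = r` for all `m ≥ s + 1`. -/
theorem kconfig_delta_r {K : Type} [Field K] [IsAlgClosed K] {s : ℕ} (hs : 2 ≤ s)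
    (X : Set (P2 K)) (Xs : Fin s → Set (P2 K)) (Ls : Fin s → ProjLine K)
    (hX : IsKConfig X (fun i : Fin s => i.1 + 1) Xs Ls)
    (r : ℕ) (hr1 : 1 ≤ r) (hrs : r < s)
    (hfin : {L : ProjLine K | (X ∩ L.points).ncard = s}.Finite)
    (hcard : {L : ProjLine K | (X ∩ L.points).ncard = s}.ncard = r) :
    ∀ m : ℕ, s + 1 ≤ m → deltaHilb (fatIdeal X m) ((m : ℤ) * s - 1) = r := by
  classical
  intro m hm
  have : Infinite K := IsAlgClosed.instInfinite
  have hXfin : X.Finite := by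
    rw [hX.union_eq]
    refine Set.finite_iUnion fun i => Set.finite_of_ncard_pos ?_
    rw [hX.card_eq]
    exact Nat.succ_pos _
  obtain ⟨Y, rfl⟩ : ∃ Y : Finset (P2 K), X = (Y : Set (P2 K)) := ⟨hXfin.toFinset, by simp⟩
  have hKC : KC onL s Y := KC_of_config s Xs Ls hX.card_eq hX.subset_line hX.not_mem Y hX.union_eq
  have hcf : ∀ l : ProjLine K, (Y.filter (fun p => onL p l)).card = ((Y : Set (P2 K)) ∩ l.points).ncard := by
    intro l
    rw [← Set.ncard_coe_finset]
    congr 1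
    ext p
    rw [Finset.mem_coe, Finset.mem_filter]
    rfl
  set Λ := hfin.toFinset with hΛdef
  have hΛ : ∀ l, l ∈ Λ ↔ (Y.filter (fun p => onL p l)).card = s := by
    intro l
    rw [hcf, hΛdef, Set.Finite.mem_toFinset]
    rfl
  have hΛc : Λ.card = r := by
    rw [← hcard, Set.ncard_eq_toFinset_card _ hfin]
  have hg := comb_main onL_uniq onL_join hKC Λ hΛ (by omega) (by omega) m hm
  have hms : s + 1 ≤ m * s := by nlinarith
  have b1 := bezout (X := Y) (s := s) (m := m) (n := m * s) le_rfl Λ (fun l hl => (hΛ l).1 hl) (by omega)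
  have b2 := bezout (X := Y) (s := s) (m := m) (n := m * s - 1) (by omega) Λ (fun l hl => (hΛ l).1 hl) (by omega)
  have d2 := hg.dim_eq
  have d1 := hg.succ.dim_eq
  rw [hΛc] at b1 b2 d1 d2
  obtain ⟨N, hN⟩ : ∃ N, m * s = N + 2 + r := ⟨m * s - 2 - r, by omega⟩
  have hH : ∀ t : ℕ, hilb (fatIdeal (Y : Set (P2 K)) m) t = (t + 2).choose 2 - DD Y (fun _ => m) (t + 1) := by
    intro t
    unfold hilb
    rw [finrank_hom]
    rfl
  have z1 : ((m : ℤ) * s - 1) = ((N + 1 + r : ℕ) : ℤ) := by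
    have : ((m * s : ℕ) : ℤ) = ((N + 2 + r : ℕ) : ℤ) := by rw [hN]
    push_cast at this ⊢
    linarith
  have z2 : ((m : ℤ) * s - 1) - 1 = ((N + r : ℕ) : ℤ) := by
    rw [z1]; push_cast; ring
  unfold deltaHilb hilbZ
  rw [z2, z1, if_neg (by omega), if_neg (by omega), Int.toNat_natCast, Int.toNat_natCast, hH, hH]
  have l1 := DD_le Y (fun _ => m) (N + 1 + r + 1)
  have l2 := DD_le Y (fun _ => m) (N + r + 1)
  rw [hN] at b1 b2 d1 d2
  rw [show N + 2 + r - 1 - r = N + 1 by omega] at b2 d1 d2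
  rw [show N + 2 + r - r = N + 1 + 1 by omega] at b1
  rw [show N + 2 + r - 1 = N + r + 1 by omega] at b2
  rw [show N + 2 + r = N + 1 + r + 1 by omega] at b1
  have c1 : (N + 1 + 1 + 1).choose 2 = (N + 1 + 1) + (N + 1 + 1).choose 2 := by
    rw [Nat.choose_succ_succ' (N + 1 + 1) 1, Nat.choose_one_right]
  have c2 : (N + 1 + r + 2).choose 2 = (N + 1 + r + 1) + (N + r + 2).choose 2 := by
    rw [Nat.choose_succ_succ' (N + 1 + r + 1) 1, Nat.choose_one_right]
    congr 2
    omega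
  rw [show N + 1 + r + 1 + 1 = N + 1 + r + 2 by omega] at l1
  rw [show N + r + 1 + 1 = N + r + 2 by omega] at l2
  omega
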